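/- arXiv:2004.07581 — 5 statements merged into one kernel-verified Lean document; each statement's English description precedes it below -/
import Mathlib

section
/- (Carlitz identity, Proposition 3.2.) For every nonnegative integer d, the identity of formal power series in one variable t over ℚ holds: (∑_{k≥1} k^d t^k) · (1−t)^{d+1} = t · E_d(t), where E_d(t) is the Eulerian polynomial regarded as a power series. -/
/-- The number of descents of a permutation of `Fin n`: indices `i` with
`i+1 < n` and `σ (i+1) < σ i`. -/
noncomputable def descentCount {n : ℕ} (σ : Equiv.Perm (Fin n)) : ℕ :=
  Nat.card {i : Fin n // ∃ h : (i : ℕ) + 1 < n, σ ⟨(i : ℕ) + 1, h⟩ < σ i}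

/-- The Eulerian polynomial `E_n(t) = ∑_{σ ∈ S_n} t^{des σ}`. -/
noncomputable def eulerianPoly (R : Type*) [CommSemiring R] (n : ℕ) : Polynomial R :=
  ∑ σ : Equiv.Perm (Fin n), Polynomial.X ^ descentCount σ

/-- Descents of a sequence among the first `m` gaps. -/
def gapCount (f : ℕ → ℕ) (m : ℕ) : ℕ :=
  ∑ i ∈ Finset.range m, if f (i + 1) < f i then 1 else 0

/-- Extension of a permutation to a sequence on `ℕ`. -/
def extSeq {n : ℕ} (σ : Equiv.Perm (Fin n)) (i : ℕ) : ℕ :=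
  if h : i < n then (σ ⟨i, h⟩ : ℕ) else 0

lemma descentCount_eq {n : ℕ} (σ : Equiv.Perm (Fin n)) :
    descentCount σ = gapCount (extSeq σ) (n - 1) := by
  unfold descentCount gapCount
  rw [← Finset.card_filter, ← Fintype.card_coe, ← Nat.card_eq_fintype_card]
  have key : ∀ i : ℕ, i ∈ (Finset.range (n - 1)).filter
      (fun i => extSeq σ (i + 1) < extSeq σ i) ↔
      ∃ (h : i + 1 < n), σ ⟨i + 1, h⟩ < σ ⟨i, by omega⟩ := by
    intro i
    rw [Finset.mem_filter, Finset.mem_range]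
    constructor
    · rintro ⟨h1, h2⟩
      have h3 : i + 1 < n := by omega
      have h4 : i < n := by omega
      simp only [extSeq, h3, h4, dif_pos] at h2
      exact ⟨h3, h2⟩
    · rintro ⟨h3, h2⟩
      have h4 : i < n := by omega
      refine ⟨by omega, ?_⟩
      simp only [extSeq, h3, h4, dif_pos]
      exact h2
  refine Nat.card_congr
    { toFun := fun x => ⟨x.1, (key _).2 x.2⟩
      invFun := fun x => ⟨⟨x.1, by obtain ⟨h, _⟩ := (key _).1 x.2; omega⟩, (key _).1 x.2⟩
      left_inv := fun x => rfl
      right_inv := fun x => rfl }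

/-- Insert the value `M` at position `p`. -/
def insSeq (f : ℕ → ℕ) (M p i : ℕ) : ℕ :=
  if i < p then f i else if i = p then M else f (i - 1)

lemma gapCount_insSeq (f : ℕ → ℕ) (n M p : ℕ) (hp : p ≤ n) (hf : ∀ i < n, f i < M) :
    gapCount (insSeq f M p) n = gapCount f (n - 1) +
      if p = n ∨ (0 < p ∧ f p < f (p - 1)) then 0 else 1 := by
  have hlo : ∀ a, a < p → ∑ i ∈ Finset.range a,
      (if insSeq f M p (i + 1) < insSeq f M p i then 1 else 0) =
      ∑ i ∈ Finset.range a, if f (i + 1) < f i then 1 else 0 := by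
    intro a ha
    apply Finset.sum_congr rfl
    intro i hi
    have := Finset.mem_range.1 hi
    have h1 : i + 1 < p := by omega
    have h2 : i < p := by omega
    simp [insSeq, h1, h2]
  have hhi : ∀ b, ∑ i ∈ Finset.range b,
      (if insSeq f M p (p + 1 + i + 1) < insSeq f M p (p + 1 + i) then 1 else 0) =
      ∑ i ∈ Finset.range b, if f (p + i + 1) < f (p + i) then 1 else 0 := by
    intro b
    apply Finset.sum_congr rfl
    intro i hi
    have e1 : insSeq f M p (p + 1 + i + 1) = f (p + i + 1) := by
      unfold insSeq
      rw [if_neg (by omega), if_neg (by omega)]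
      congr 1; omega
    have e2 : insSeq f M p (p + 1 + i) = f (p + i) := by
      unfold insSeq
      rw [if_neg (by omega), if_neg (by omega)]
      congr 1; omega
    rw [e1, e2]
  have hM : insSeq f M p p = M := by simp [insSeq]
  have hM1 : insSeq f M p (p + 1) = f p := by simp [insSeq]
  obtain ⟨q, rfl⟩ := Nat.exists_eq_add_of_le hp
  unfold gapCount
  rcases p with _ | a
  · rcases q with _ | b
    · simp
    · have := hhi b
      have h0 := hf 0 (by omega)
      rw [show 0 + (b + 1) = 1 + b by omega, Finset.sum_range_add]
      simp only [zero_add, Finset.sum_range_one] at *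
      have h4 : 0 ≠ 1 + b := by omega
      rw [this, hM, hM1, show 1 + b - 1 = b by omega, if_pos h0]
      simp only [h4, lt_irrefl, false_and, or_self, if_false]
      omega
  · have hA : insSeq f M (a + 1) a = f a := by simp [insSeq]
    have ha := hf a (by omega)
    have hl := hlo a (by omega)
    rcases q with _ | b
    · simp only [add_zero, Nat.add_sub_cancel, true_or, if_true]
      rw [Finset.sum_range_succ, hl, hM, hA]
      simp; omega
    · have := hhi b
      have h0 := hf (a + 1) (by omega)
      rw [show a + 1 + (b + 1) = (a + 1 + 1) + b by omega, Finset.sum_range_add,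
        this, Finset.sum_range_succ, Finset.sum_range_succ, hl, hM, hM1, hA,
        show a + 1 + 1 + b - 1 = a + 1 + b by omega, Finset.sum_range_add _ (a + 1) b,
        Finset.sum_range_succ]
      have h3 : ¬ (M < f a) := by omega
      have h4 : a + 1 ≠ a + 1 + 1 + b := by omega
      simp only [h3, h0, h4, if_true, if_false, false_or, Nat.add_sub_cancel, Nat.succ_pos,
        true_and]
      split_ifs <;> omega

lemma sum_positions (f : ℕ → ℕ) (n k : ℕ) (hk : k = gapCount f (n - 1)) :
    ∑ p ∈ Finset.range (n + 1),
      (Polynomial.X : Polynomial ℚ) ^ (k +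
        if p = n ∨ (0 < p ∧ f p < f (p - 1)) then 0 else 1) =
    ((k : Polynomial ℚ) + 1) * Polynomial.X ^ k +
      ((n : Polynomial ℚ) - (k : Polynomial ℚ)) * Polynomial.X ^ (k + 1) := by
  have aux : ∀ m, ∑ i ∈ Finset.range m, (Polynomial.X : Polynomial ℚ) ^ (k +
        if f (i + 1) < f i then 0 else 1) =
      (gapCount f m : Polynomial ℚ) * Polynomial.X ^ k +
        ((m : Polynomial ℚ) - (gapCount f m : Polynomial ℚ)) * Polynomial.X ^ (k + 1) := by
    intro m
    unfold gapCount
    induction m with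
    | zero => simp
    | succ m ih =>
      rw [Finset.sum_range_succ, ih, Finset.sum_range_succ]
      split_ifs <;> push_cast <;> ring
  rw [Finset.sum_range_succ]
  have : ∑ p ∈ Finset.range n, (Polynomial.X : Polynomial ℚ) ^ (k +
        if p = n ∨ (0 < p ∧ f p < f (p - 1)) then 0 else 1) =
      ∑ p ∈ Finset.range n, (Polynomial.X : Polynomial ℚ) ^ (k +
        if (0 < p ∧ f p < f (p - 1)) then 0 else 1) := by
    apply Finset.sum_congr rfl
    intro p hp
    have := Finset.mem_range.1 hp
    have h : p ≠ n := by omega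
    simp [h]
  rw [this]
  rcases n with _ | m
  · have : k = 0 := by simpa [gapCount] using hk
    subst this
    simp
  · rw [Finset.sum_range_succ']
    simp only [Nat.add_sub_cancel, Nat.succ_pos, true_and, true_or, if_true, lt_irrefl,
      false_and, if_false] at *
    rw [aux m, ← hk]
    push_cast
    ring

/-- Insert the maximal value at position `p`. -/
def insPerm {n : ℕ} (x : Fin (n + 1) × Equiv.Perm (Fin n)) : Equiv.Perm (Fin (n + 1)) :=
  (finSuccEquiv' x.1).trans ((Equiv.optionCongr x.2).trans (finSuccEquiv' (Fin.last n)).symm)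

lemma insPerm_self {n : ℕ} (p : Fin (n + 1)) (σ : Equiv.Perm (Fin n)) :
    insPerm (p, σ) p = Fin.last n := by
  simp [insPerm]

lemma insPerm_succAbove {n : ℕ} (p : Fin (n + 1)) (σ : Equiv.Perm (Fin n)) (i : Fin n) :
    insPerm (p, σ) (p.succAbove i) = (σ i).castSucc := by
  simp [insPerm]

lemma insPerm_bijective (n : ℕ) : Function.Bijective (insPerm (n := n)) := by
  rw [Fintype.bijective_iff_injective_and_card]
  constructor
  · rintro ⟨p, σ⟩ ⟨q, τ⟩ h
    have hpq : p = q := by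
      apply (insPerm (q, τ)).injective
      rw [insPerm_self, ← h, insPerm_self]
    subst hpq
    congr 1
    ext i
    have := insPerm_succAbove p σ i
    rw [h, insPerm_succAbove] at this
    simpa using (congrArg Fin.val this).symm
  · simp [Fintype.card_perm, Nat.factorial_succ]

lemma extSeq_insPerm {n : ℕ} (p : Fin (n + 1)) (σ : Equiv.Perm (Fin n)) (i : ℕ)
    (hi : i < n + 1) :
    extSeq (insPerm (p, σ)) i = insSeq (extSeq σ) n p i := by
  rw [extSeq, dif_pos hi]
  rcases Fin.eq_self_or_eq_succAbove p ⟨i, hi⟩ with h | ⟨j, hj⟩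
  · rw [h, insPerm_self]
    subst h
    simp [insSeq]
  · rw [hj, insPerm_succAbove]
    have hv := congrArg Fin.val hj
    simp only [Fin.succAbove, Fin.lt_def, Fin.val_castSucc] at hv
    have hjn := j.2
    unfold insSeq
    split_ifs at hv with h1
    · simp only [Fin.val_castSucc] at hv
      rw [if_pos (by omega), hv]
      simp [extSeq]
    · simp only [Fin.val_succ] at hv
      rw [if_neg (by omega), if_neg (by omega), hv]
      simp [extSeq]

lemma descentCount_insPerm {n : ℕ} (p : Fin (n + 1)) (σ : Equiv.Perm (Fin n)) :
    descentCount (insPerm (p, σ)) = descentCount σ +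
      if (p : ℕ) = n ∨ (0 < (p : ℕ) ∧ extSeq σ p < extSeq σ (p - 1)) then 0 else 1 := by
  rw [descentCount_eq, descentCount_eq, Nat.add_sub_cancel,
    ← gapCount_insSeq (extSeq σ) n n p (by omega) (by intro i hi; simp [extSeq, hi])]
  unfold gapCount
  apply Finset.sum_congr rfl
  intro i hi
  have := Finset.mem_range.1 hi
  rw [extSeq_insPerm _ _ _ (by omega), extSeq_insPerm _ _ _ (by omega)]

lemma eulerianPoly_succ (n : ℕ) :
    eulerianPoly ℚ (n + 1) = (1 + (n : Polynomial ℚ) * Polynomial.X) * eulerianPoly ℚ n +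
      Polynomial.X * (1 - Polynomial.X) * Polynomial.derivative (eulerianPoly ℚ n) := by
  have h1 : eulerianPoly ℚ (n + 1) = ∑ σ : Equiv.Perm (Fin n),
      (((descentCount σ : Polynomial ℚ) + 1) * Polynomial.X ^ descentCount σ +
        ((n : Polynomial ℚ) - (descentCount σ : Polynomial ℚ)) * Polynomial.X ^ (descentCount σ + 1)) := by
    unfold eulerianPoly
    rw [← (insPerm_bijective n).sum_comp, Fintype.sum_prod_type_right]
    apply Finset.sum_congr rfl
    intro σ _
    rw [← sum_positions (extSeq σ) n _ (descentCount_eq σ), ← Fin.sum_univ_eq_sum_range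
      (fun p => (Polynomial.X : Polynomial ℚ) ^ (descentCount σ +
        if p = n ∨ (0 < p ∧ extSeq σ p < extSeq σ (p - 1)) then 0 else 1))]
    apply Finset.sum_congr rfl
    intro p _
    rw [descentCount_insPerm]
  rw [h1]
  unfold eulerianPoly
  rw [Polynomial.derivative_sum, Finset.mul_sum, Finset.mul_sum, ← Finset.sum_add_distrib]
  apply Finset.sum_congr rfl
  intro σ _
  generalize descentCount σ = k
  rcases k with _ | k
  · simp
  · simp only [Polynomial.derivative_X_pow, Nat.add_sub_cancel, Polynomial.C_eq_natCast]
    push_cast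
    ring

/-- Carlitz identity: `(∑_{k≥1} k^d t^k) (1-t)^{d+1} = t E_d(t)` as formal power series. -/
theorem carlitz_identity (d : ℕ) :
    (PowerSeries.mk fun k => if k = 0 then (0 : ℚ) else (k : ℚ) ^ d) *
        (1 - PowerSeries.X) ^ (d + 1) =
      PowerSeries.X * (eulerianPoly ℚ d : PowerSeries ℚ) := by
  induction d with
  | zero =>
    have h : eulerianPoly ℚ 0 = 1 := by
      simp [eulerianPoly, descentCount]
    rw [h]
    ext k
    rcases k with _ | k
    · simp
    · rw [zero_add, pow_one, mul_sub, mul_one, map_sub, PowerSeries.coeff_succ_mul_X,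
        Polynomial.coe_one, mul_one, PowerSeries.coeff_X]
      simp
      split_ifs <;> simp
  | succ d ih =>
    have hF : (PowerSeries.mk fun k => if k = 0 then (0 : ℚ) else (k : ℚ) ^ (d + 1)) =
        PowerSeries.X * PowerSeries.derivative ℚ
          (PowerSeries.mk fun k => if k = 0 then (0 : ℚ) else (k : ℚ) ^ d) := by
      ext k
      rcases k with _ | k
      · simp
      · rw [PowerSeries.coeff_succ_X_mul, PowerSeries.coeff_derivative]
        simp [pow_succ]
    rw [hF, eulerianPoly_succ]
    have hd := congrArg (PowerSeries.derivative ℚ) ih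
    generalize (PowerSeries.mk fun k => if k = 0 then (0 : ℚ) else (k : ℚ) ^ d) = F at *
    have hE : PowerSeries.derivative ℚ (eulerianPoly ℚ d : PowerSeries ℚ) =
      ((Polynomial.derivative (eulerianPoly ℚ d) : Polynomial ℚ) : PowerSeries ℚ) :=
      PowerSeries.derivative_coe _
    have hn : (((d : Polynomial ℚ)) : PowerSeries ℚ) = (d : PowerSeries ℚ) := 
      map_natCast (Polynomial.coeToPowerSeries.ringHom (R := ℚ)) d
    simp only [Derivation.leibniz, Derivation.leibniz_pow, map_sub, PowerSeries.derivative_X,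
      hE, smul_eq_mul, Nat.add_sub_cancel, Derivation.map_one_eq_zero, nsmul_eq_mul] at hd
    simp only [Polynomial.coe_add, Polynomial.coe_mul, Polynomial.coe_sub, Polynomial.coe_one,
      Polynomial.coe_X, hn]
    push_cast at hd
    linear_combination (PowerSeries.X * (1 - PowerSeries.X)) * hd +
      ((d : PowerSeries ℚ) + 1) * PowerSeries.X * ih
end

section
/- (Corollary 3.5.) Let t, z be real numbers with t > 1 and |z| < log t. Then the series ∑_{n≥0} t·E_n(t)·z^{n+1} / ((n+1)!·(1−t)^{n+1}) converges, and its sum equals −z − log(t − e^{−z}) + log(t − 1). (Here t − e^{−z} > 0 under the stated hypotheses, so the logarithm is defined.) -/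
open Finset

/-- One-line word of a permutation, padded by zero on both sides. -/
noncomputable def padWord {n : ℕ} (τ : Equiv.Perm (Fin n)) (i : ℕ) : ℕ :=
  if h : 1 ≤ i ∧ i ≤ n then (τ ⟨i - 1, by omega⟩ : ℕ) + 1 else 0

/-- Descents of a natural-number word among the first `m` indices. -/
def wordDes (w : ℕ → ℕ) (m : ℕ) : ℕ := ∑ i ∈ range m, if w (i + 1) < w i then 1 else 0

lemma wordDes_insert (w w' : ℕ → ℕ) (n p : ℕ) (hp : p ≤ n) (hw : ∀ i, w i ≤ n)
    (h1 : ∀ i, i ≤ p → w' i = w i) (h2 : w' (p + 1) = n + 1)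
    (h3 : ∀ i, p + 1 ≤ i → w' (i + 1) = w i) :
    wordDes w' (n + 2) + (if w (p + 1) < w p then 1 else 0) = wordDes w (n + 1) + 1 := by
  obtain ⟨m, rfl⟩ := Nat.exists_eq_add_of_le hp
  unfold wordDes
  rw [show p + m + 2 = p + (1 + (1 + m)) by ring, show p + m + 1 = p + (1 + m) by ring]
  rw [Finset.sum_range_add, Finset.sum_range_add _ p, Finset.sum_range_add _ 1,
    Finset.sum_range_add _ 1, Finset.sum_range_add _ 1]
  have e1 : ∑ x ∈ range p, (if w' (x + 1) < w' x then 1 else 0)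
      = ∑ x ∈ range p, (if w (x + 1) < w x then 1 else 0) := by
    refine Finset.sum_congr rfl fun x hx => ?_
    have := Finset.mem_range.1 hx
    rw [h1 _ (by omega), h1 _ (by omega)]
  have e2 : ∑ x ∈ range m, (if w' (p + (1 + (1 + x)) + 1) < w' (p + (1 + (1 + x))) then 1 else 0)
      = ∑ x ∈ range m, (if w (p + (1 + x) + 1) < w (p + (1 + x)) then 1 else 0) := by
    refine Finset.sum_congr rfl fun x hx => ?_
    rw [h3 _ (by omega), show p + (1 + (1 + x)) = (p + (1 + x)) + 1 by ring, h3 _ (by omega)]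
  rw [e1, e2]
  have a1 : ¬ (w' (p + 1) < w' p) := by
    rw [h2, h1 p le_rfl]; have := hw p; omega
  have a2 : w' (p + 1 + 1) < w' (p + 1) := by
    rw [h2, h3 _ le_rfl]; have := hw (p + 1); omega
  simp only [Finset.sum_range_one, add_zero, if_neg a1, if_pos a2]
  ring

lemma wordDes_padWord {n : ℕ} (τ : Equiv.Perm (Fin (n + 1))) :
    wordDes (padWord τ) (n + 2) = descentCount τ + 1 := by
  unfold wordDes
  rw [Finset.sum_range_succ, Finset.sum_range_succ']
  have b1 : padWord τ (n + 1 + 1) < padWord τ (n + 1) := by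
    simp [padWord]
  have b2 : ¬ (padWord τ (0 + 1) < padWord τ 0) := by
    simp [padWord]
  rw [if_pos b1, if_neg b2, add_zero]
  congr 1
  unfold descentCount
  classical
  rw [Nat.card_eq_fintype_card, Fintype.card_subtype, Finset.card_filter, Fin.sum_univ_castSucc,
    Finset.sum_range]
  simp only [Fin.val_last, Fin.val_castSucc]
  rw [if_neg (by rintro ⟨h, -⟩; omega), add_zero]
  refine Finset.sum_congr rfl fun i _ => ?_
  have hi := i.2
  congr 1
  have q1 : padWord τ (i + 1 + 1) = (τ ⟨(i : ℕ) + 1, by omega⟩ : ℕ) + 1 := by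
    unfold padWord; rw [dif_pos (by omega)]; rfl
  have q2 : padWord τ (i + 1) = (τ i.castSucc : ℕ) + 1 := by
    unfold padWord; rw [dif_pos (by omega)]; rfl
  rw [q1, q2]
  simp only [eq_iff_iff]
  constructor
  · intro h
    exact ⟨by omega, by rw [Fin.lt_def]; omega⟩
  · rintro ⟨h, h'⟩
    rw [Fin.lt_def] at h'; omega

/-- Insert the new maximum at position `p`. -/
noncomputable def insMax {n : ℕ} (p : Fin (n + 1)) (τ : Equiv.Perm (Fin n)) :
    Equiv.Perm (Fin (n + 1)) :=
  (finSuccEquiv' p).trans ((Equiv.optionCongr τ).trans (finSuccEquiv' (Fin.last n)).symm)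

lemma insMax_self {n : ℕ} (p : Fin (n + 1)) (τ : Equiv.Perm (Fin n)) :
    insMax p τ p = Fin.last n := by
  simp [insMax]

lemma insMax_succAbove {n : ℕ} (p : Fin (n + 1)) (τ : Equiv.Perm (Fin n)) (i : Fin n) :
    insMax p τ (p.succAbove i) = (τ i).castSucc := by
  simp [insMax]

lemma insMax_bijective (n : ℕ) :
    Function.Bijective (fun x : Fin (n + 1) × Equiv.Perm (Fin n) => insMax x.1 x.2) := by
  rw [Fintype.bijective_iff_injective_and_card]
  constructor
  · rintro ⟨p, τ⟩ ⟨q, ρ⟩ h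
    simp only at h
    have hpq : p = q := by
      apply (insMax q ρ).injective
      rw [insMax_self, ← h, insMax_self]
    subst hpq
    congr 1
    ext i
    have := congrArg (fun f => (f (p.succAbove i) : ℕ)) h
    simpa [insMax_succAbove] using this
  · simp [Fintype.card_perm, Nat.factorial_succ]

lemma padWord_le {n : ℕ} (τ : Equiv.Perm (Fin n)) (i : ℕ) : padWord τ i ≤ n := by
  unfold padWord
  split_ifs with h
  · exact (τ _).2
  · omega

lemma wordDes_insMax {n : ℕ} (p : Fin (n + 1)) (τ : Equiv.Perm (Fin n)) :
    wordDes (padWord (insMax p τ)) (n + 2) +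
      (if padWord τ (p + 1) < padWord τ p then 1 else 0) = wordDes (padWord τ) (n + 1) + 1 := by
  have hp := p.2
  refine wordDes_insert _ _ n p (by omega) (padWord_le τ) ?_ ?_ ?_
  · intro i hi
    unfold padWord
    by_cases h : 1 ≤ i
    · rw [dif_pos (by omega), dif_pos (by omega)]
      have : (⟨i - 1, by omega⟩ : Fin (n + 1)) = p.succAbove ⟨i - 1, by omega⟩ := by
        rw [Fin.succAbove_of_castSucc_lt _ _ (by rw [Fin.lt_def]; simp; omega)]; rfl
      rw [this, insMax_succAbove]; rfl
    · rw [dif_neg (by omega), dif_neg (by omega)]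
  · unfold padWord
    rw [dif_pos (by omega)]
    have : (⟨(p : ℕ) + 1 - 1, by omega⟩ : Fin (n + 1)) = p := by ext; simp
    rw [this, insMax_self]; rfl
  · intro i hi
    unfold padWord
    by_cases h : i ≤ n
    · rw [dif_pos (by omega), dif_pos (by omega)]
      have : (⟨i + 1 - 1, by omega⟩ : Fin (n + 1)) = p.succAbove ⟨i - 1, by omega⟩ := by
        rw [Fin.succAbove_of_le_castSucc _ _ (by rw [Fin.le_def]; simp; omega)]
        ext; simp; omega
      rw [this, insMax_succAbove]; rfl
    · rw [dif_neg (by omega), dif_neg (by omega)]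

lemma descentCount_le {n : ℕ} (τ : Equiv.Perm (Fin n)) : descentCount τ ≤ n := by
  unfold descentCount
  classical
  rw [Nat.card_eq_fintype_card]
  simpa using Fintype.card_subtype_le (α := Fin n) _

lemma descentCount_one (τ : Equiv.Perm (Fin 1)) : descentCount τ = 0 := by
  have := wordDes_padWord τ
  unfold descentCount
  rw [Nat.card_eq_zero]
  left
  constructor
  rintro ⟨i, h, -⟩
  omega

lemma sum_insMax {n : ℕ} (τ : Equiv.Perm (Fin (n + 1))) (g : ℕ → ℤ) :
    ∑ p, g (descentCount (insMax p τ)) = (descentCount τ + 1) * g (descentCount τ)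
      + ((n + 1 : ℕ) - descentCount τ) * g (descentCount τ + 1) := by
  have key : ∀ p : Fin (n + 2), g (descentCount (insMax p τ)) =
      g (descentCount τ + 1) + (if padWord τ (p + 1) < padWord τ p then 1 else 0 : ℕ) *
        (g (descentCount τ) - g (descentCount τ + 1)) := by
    intro p
    have h := wordDes_insMax p τ
    rw [wordDes_padWord, wordDes_padWord] at h
    split_ifs at h ⊢
    · rw [show descentCount (insMax p τ) = descentCount τ by omega]; simp
    · rw [show descentCount (insMax p τ) = descentCount τ + 1 by omega]; simp
  rw [Finset.sum_congr rfl fun p _ => key p, Finset.sum_add_distrib, ← Finset.sum_mul,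
    ← Nat.cast_sum]
  have := wordDes_padWord τ
  unfold wordDes at this
  rw [Finset.sum_range] at this
  rw [this]
  simp
  ring

lemma choose_step (k d n : ℕ) :
    ((d : ℤ) + 1) * (k + d).choose (n + 1) + ((n : ℤ) - d) * (k + (d + 1)).choose (n + 1)
      = k * (k + d).choose n := by
  rw [← add_assoc, Nat.choose_succ_succ]
  have h := Nat.choose_succ_right_eq (k + d) n
  have h' : ((k + d).choose (n + 1) : ℤ) * (n + 1) = (k + d).choose n * ((k : ℤ) + d - n) := by
    rcases le_total n (k + d) with hle | hle
    · zify [hle] at h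
      exact_mod_cast h
    · rcases hle.eq_or_lt with e | hlt
      · rw [Nat.choose_eq_zero_of_lt (by omega : k + d < n + 1)]
        have : (k : ℤ) + d - n = 0 := by rw [← e]; push_cast; ring
        rw [this]; simp
      · rw [Nat.choose_eq_zero_of_lt hlt, Nat.choose_eq_zero_of_lt (by omega : k + d < n + 1)]
        simp
  push_cast
  linear_combination h'

/-- Worpitzky's identity. -/
lemma worpitzky (n k : ℕ) :
    ∑ τ : Equiv.Perm (Fin n), ((k + descentCount τ).choose n : ℤ) = (k : ℤ) ^ n := by
  induction n with
  | zero => simp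
  | succ n ih =>
    cases n with
    | zero => simp [descentCount_one]
    | succ n =>
      rw [← (insMax_bijective (n + 1)).sum_comp
        (fun τ => ((k + descentCount τ).choose (n + 1 + 1) : ℤ)), Fintype.sum_prod_type_right]
      rw [pow_succ, ← ih, Finset.sum_mul]
      refine Finset.sum_congr rfl fun τ _ => ?_
      rw [sum_insMax τ (fun d => ((k + d).choose (n + 1 + 1) : ℤ)), choose_step, mul_comm]

lemma hasSum_choose (n d : ℕ) (hd : d ≤ n) (t : ℝ) (ht : 1 < t) :
    HasSum (fun k : ℕ => ((k + d).choose n : ℝ) * (t⁻¹) ^ k) (t * t ^ d / (t - 1) ^ (n + 1)) := by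
  have hs : ‖t⁻¹‖ < 1 := by
    rw [Real.norm_of_nonneg (by positivity)]; exact inv_lt_one_of_one_lt₀ ht
  have h := hasSum_choose_mul_geometric_of_norm_lt_one n hs
  have h2 := h.mul_left ((t⁻¹) ^ (n - d))
  rw [← hasSum_nat_add_iff' (n - d)]
  have hz : ∑ i ∈ range (n - d), ((i + d).choose n : ℝ) * (t⁻¹) ^ i = 0 := by
    refine Finset.sum_eq_zero fun i hi => ?_
    have := Finset.mem_range.1 hi
    rw [Nat.choose_eq_zero_of_lt (by omega)]; simp
  rw [hz, sub_zero]
  convert h2 using 1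
  · rfl
  · funext k
    rw [show k + (n - d) + d = k + n by omega, pow_add]
    ring
  · have ht0 : t ≠ 0 := by positivity
    have ht1 : t - 1 ≠ 0 := by linarith
    have : 1 - t⁻¹ = (t - 1) / t := by field_simp
    rw [this, div_pow, inv_pow, one_div_div]
    obtain ⟨m, rfl⟩ := Nat.exists_eq_add_of_le hd
    rw [show d + m - d = m by omega]
    field_simp
    ring

lemma hasSum_eulerian (n : ℕ) (t : ℝ) (ht : 1 < t) :
    HasSum (fun k : ℕ => (k : ℝ) ^ n * (t⁻¹) ^ k)
      (t * (eulerianPoly ℝ n).eval t / (t - 1) ^ (n + 1)) := by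
  have h : HasSum (fun k : ℕ => ∑ τ : Equiv.Perm (Fin n),
      ((k + descentCount τ).choose n : ℝ) * (t⁻¹) ^ k)
      (∑ τ : Equiv.Perm (Fin n), t * t ^ descentCount τ / (t - 1) ^ (n + 1)) :=
    hasSum_sum fun τ _ => hasSum_choose n _ (descentCount_le τ) t ht
  convert h using 1
  · funext k
    rw [← Finset.sum_mul]
    congr 1
    exact_mod_cast (worpitzky n k).symm
  · simp [eulerianPoly, Polynomial.eval_finset_sum, Finset.mul_sum, Finset.sum_div]

/-- For real `t > 1` and `|z| < log t`, one has `t - e^{-z} > 0` and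
`∑_{n≥0} t E_n(t) z^{n+1} / ((n+1)! (1-t)^{n+1}) = -z - log(t - e^{-z}) + log(t-1)`,
the series converging. -/
theorem eulerian_log_sum (t z : ℝ) (ht : 1 < t) (hz : |z| < Real.log t) :
    0 < t - Real.exp (-z) ∧
    HasSum
      (fun n : ℕ =>
        t * (eulerianPoly ℝ n).eval t * z ^ (n + 1) /
          ((n + 1).factorial * (1 - t) ^ (n + 1)))
      (-z - Real.log (t - Real.exp (-z)) + Real.log (t - 1)) := by
  have ht0 : 0 < t := by linarith
  have hexp : ∀ y : ℝ, |y| = |z| → Real.exp y < t := fun y hy => by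
    rw [← Real.lt_log_iff_exp_lt ht0]
    exact lt_of_le_of_lt (le_abs_self y) (hy ▸ hz)
  have hpos : 0 < t - Real.exp (-z) := sub_pos.2 (hexp _ (abs_neg z))
  refine ⟨hpos, ?_⟩
  -- inner sums
  have inner : ∀ y : ℝ, ∀ k : ℕ, HasSum
      (fun n : ℕ => y ^ (n + 1) / (n + 1).factorial * ((k : ℝ) ^ n * (t⁻¹) ^ k))
      (if k = 0 then y else ((Real.exp y * t⁻¹) ^ k / k - (t⁻¹) ^ k / k)) := by
    intro y k
    split_ifs with hk
    · subst hk
      convert hasSum_single (f := fun n : ℕ => y ^ (n + 1) / (n + 1).factorial *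
        (((0 : ℕ) : ℝ) ^ n * (t⁻¹) ^ 0)) 0 (fun n hn => by simp [hn]) using 1
      simp
    · have hk' : (k : ℝ) ≠ 0 := by exact_mod_cast hk
      have h := NormedSpace.expSeries_div_hasSum_exp (k * y : ℝ)
      rw [← Real.exp_eq_exp_ℝ, ← hasSum_nat_add_iff' 1] at h
      have h2 := h.mul_right ((t⁻¹) ^ k / k)
      convert h2 using 1
      · rfl
      · funext n
        have : ((n + 1).factorial : ℝ) ≠ 0 := by positivity
        field_simp
        try ring
      · simp [mul_pow, ← Real.exp_nat_mul]
        ring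
  -- outer sums
  have outer : ∀ y : ℝ, |y| = |z| → HasSum
      (fun k : ℕ => if k = 0 then y else ((Real.exp y * t⁻¹) ^ k / k - (t⁻¹) ^ k / k))
      (y - Real.log (t - Real.exp y) + Real.log (t - 1)) := by
    intro y hy
    have a1 : |Real.exp y * t⁻¹| < 1 := by
      rw [abs_of_nonneg (by positivity), ← div_eq_mul_inv, div_lt_one ht0]
      exact hexp y hy
    have a2 : |t⁻¹| < 1 := by
      rw [abs_of_nonneg (by positivity)]; exact inv_lt_one_of_one_lt₀ ht
    have h := (Real.hasSum_pow_div_log_of_abs_lt_one a1).sub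
      (Real.hasSum_pow_div_log_of_abs_lt_one a2)
    rw [← hasSum_nat_add_iff' 1]
    convert h using 1
    · funext k
      simp
    · have e1 : 1 - Real.exp y * t⁻¹ = (t - Real.exp y) / t := by field_simp
      have e2 : 1 - t⁻¹ = (t - 1) / t := by field_simp
      rw [e1, e2, Real.log_div (by linarith [hexp y hy]) ht0.ne',
        Real.log_div (by linarith) ht0.ne']
      simp
      ring
  let f : ℕ × ℕ → ℝ := fun x =>
    (-z) ^ (x.2 + 1) / (x.2 + 1).factorial * ((x.1 : ℝ) ^ x.2 * (t⁻¹) ^ x.1)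
  have hf : Summable f := by
    apply Summable.of_norm
    have hn : ∀ x : ℕ × ℕ, ‖f x‖ =
        |z| ^ (x.2 + 1) / (x.2 + 1).factorial * ((x.1 : ℝ) ^ x.2 * (t⁻¹) ^ x.1) := by
      intro x
      simp [f, abs_of_pos ht0]
    rw [summable_prod_of_nonneg (fun x => norm_nonneg _)]
    constructor
    · intro k
      simp only [hn]
      exact (inner |z| k).summable
    · simp only [hn]
      simp only [fun k => (inner |z| k).tsum_eq]
      exact (outer |z| (abs_abs z)).summable
  have h1 := hf.hasSum.prod_fiberwise (fun k => inner (-z) k)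
  have hval := h1.unique (outer (-z) (abs_neg z))
  have hsw := (Equiv.prodComm ℕ ℕ).hasSum_iff.2 hf.hasSum
  have h2 := hsw.prod_fiberwise (fun n => (hasSum_eulerian n t ht).mul_left
    ((-z) ^ (n + 1) / (n + 1).factorial))
  rw [hval] at h2
  convert h2 using 1
  funext n
  have : t - 1 ≠ 0 := by linarith
  rw [show (1 - t) = -(t - 1) by ring, neg_pow (t - 1), neg_pow z]
  rcases neg_one_pow_eq_or ℝ (n + 1) with h | h <;> rw [h] <;> field_simp
end

section
/- (Lemma 3.7, real convergent form.) Let A, B, z, t be real numbers with |t| < exp(−(|A|+|B|)·|z|/2). Then each of the four numbers 1 − t·e^{(A−B)z/2}, 1 − t·e^{−(A−B)z/2}, 1 − t·e^{(A+B)z/2}, 1 − t·e^{−(A+B)z/2} is positive, the series ∑_{k≥1} A·B·z²·k·S(kAz)·S(kBz)·t^k converges absolutely, and its sum equals log( ((1 − t·e^{(A−B)z/2})·(1 − t·e^{−(A−B)z/2})) / ((1 − t·e^{(A+B)z/2})·(1 − t·e^{−(A+B)z/2})) ). -/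
/-- The function `S(x) = sinh(x/2)/(x/2)` for `x ≠ 0`, with `S(0) = 1`. -/
noncomputable def S (x : ℝ) : ℝ := if x = 0 then 1 else Real.sinh (x / 2) / (x / 2)

theorem S_mul (x : ℝ) : x * S x = 2 * Real.sinh (x / 2) := by
  unfold S
  split_ifs with h
  · simp [h]
  · field_simp

theorem hasSum_log_aux {x : ℝ} (h : |x| < 1) :
    HasSum (fun n : ℕ => x ^ n / (n : ℝ)) (-Real.log (1 - x)) := by
  rw [← hasSum_nat_add_iff' 1]
  simpa using Real.hasSum_pow_div_log_of_abs_lt_one h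

theorem abs_aux (A B z t c : ℝ) (ht : |t| < Real.exp (-((|A| + |B|) * |z| / 2)))
    (hc : c ≤ (|A| + |B|) * |z| / 2) : |t * Real.exp c| < 1 := by
  rw [abs_mul, Real.abs_exp]
  calc |t| * Real.exp c < Real.exp (-((|A| + |B|) * |z| / 2)) * Real.exp c :=
        mul_lt_mul_of_pos_right ht (Real.exp_pos c)
    _ = Real.exp (-((|A| + |B|) * |z| / 2) + c) := (Real.exp_add _ _).symm
    _ ≤ 1 := Real.exp_le_one_iff.mpr (by linarith)

theorem term_aux (A B z t : ℝ) (k : ℕ) :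
    A * B * z ^ 2 * (k : ℝ) * S ((k : ℝ) * A * z) * S ((k : ℝ) * B * z) * t ^ k =
      (t * Real.exp ((A + B) * z / 2)) ^ k / (k : ℝ)
      + (t * Real.exp (-((A + B) * z / 2))) ^ k / (k : ℝ)
      - (t * Real.exp ((A - B) * z / 2)) ^ k / (k : ℝ)
      - (t * Real.exp (-((A - B) * z / 2))) ^ k / (k : ℝ) := by
  rcases Nat.eq_zero_or_pos k with rfl | hk
  · simp
  have hk' : (k : ℝ) ≠ 0 := by positivity
  have h1 := S_mul ((k : ℝ) * A * z)
  have h2 := S_mul ((k : ℝ) * B * z)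
  have h3 : A * B * z ^ 2 * (k : ℝ) * S ((k : ℝ) * A * z) * S ((k : ℝ) * B * z) * t ^ k =
      ((k : ℝ) * A * z * S ((k : ℝ) * A * z)) * ((k : ℝ) * B * z * S ((k : ℝ) * B * z))
        * t ^ k / (k : ℝ) := by
    field_simp
  rw [h3, h1, h2, Real.sinh_eq, Real.sinh_eq]
  simp only [mul_pow, ← Real.exp_nat_mul]
  have e1 : (k : ℝ) * ((A + B) * z / 2) = (k : ℝ) * A * z / 2 + (k : ℝ) * B * z / 2 := by ring
  have e2 : (k : ℝ) * (-((A + B) * z / 2)) = -((k : ℝ) * A * z / 2) + -((k : ℝ) * B * z / 2) := by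
    ring
  have e3 : (k : ℝ) * ((A - B) * z / 2) = (k : ℝ) * A * z / 2 + -((k : ℝ) * B * z / 2) := by ring
  have e4 : (k : ℝ) * (-((A - B) * z / 2)) = -((k : ℝ) * A * z / 2) + (k : ℝ) * B * z / 2 := by
    ring
  rw [e1, e2, e3, e4]
  simp only [Real.exp_add]
  ring

/-- Real convergent form of Lemma 3.7: for `|t| < exp(-(|A|+|B|)|z|/2)`, the four
numbers `1 - t e^{±(A∓B)z/2}` are positive, the series
`∑_{k≥1} A B z² k S(kAz) S(kBz) t^k` converges absolutely, and its sum is the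
logarithm of the displayed ratio. -/
theorem sum_S_eq_log (A B z t : ℝ) (ht : |t| < Real.exp (-((|A| + |B|) * |z| / 2))) :
    0 < 1 - t * Real.exp ((A - B) * z / 2) ∧
    0 < 1 - t * Real.exp (-((A - B) * z / 2)) ∧
    0 < 1 - t * Real.exp ((A + B) * z / 2) ∧
    0 < 1 - t * Real.exp (-((A + B) * z / 2)) ∧
    Summable (fun k : ℕ =>
      |A * B * z ^ 2 * (k : ℝ) * S ((k : ℝ) * A * z) * S ((k : ℝ) * B * z) * t ^ k|) ∧
    HasSum
      (fun k : ℕ =>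
        A * B * z ^ 2 * (k : ℝ) * S ((k : ℝ) * A * z) * S ((k : ℝ) * B * z) * t ^ k)
      (Real.log
        ((1 - t * Real.exp ((A - B) * z / 2)) * (1 - t * Real.exp (-((A - B) * z / 2))) /
          ((1 - t * Real.exp ((A + B) * z / 2)) * (1 - t * Real.exp (-((A + B) * z / 2)))))) := by
  have hb1 : |(A - B) * z / 2| ≤ (|A| + |B|) * |z| / 2 := by
    rw [abs_div, abs_mul, abs_two]
    have := abs_sub A B
    gcongr
  have hb2 : |(A + B) * z / 2| ≤ (|A| + |B|) * |z| / 2 := by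
    rw [abs_div, abs_mul, abs_two]
    have := abs_add_le A B
    gcongr
  have a1 := abs_aux A B z t _ ht ((le_abs_self _).trans hb1)
  have a2 := abs_aux A B z t _ ht ((neg_le_abs _).trans hb1)
  have a3 := abs_aux A B z t _ ht ((le_abs_self _).trans hb2)
  have a4 := abs_aux A B z t _ ht ((neg_le_abs _).trans hb2)
  have p1 := sub_pos.mpr (abs_lt.mp a1).2
  have p2 := sub_pos.mpr (abs_lt.mp a2).2
  have p3 := sub_pos.mpr (abs_lt.mp a3).2
  have p4 := sub_pos.mpr (abs_lt.mp a4).2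
  have hs := (((hasSum_log_aux a3).add (hasSum_log_aux a4)).sub (hasSum_log_aux a1)).sub
    (hasSum_log_aux a2)
  simp only [← term_aux] at hs
  refine ⟨p1, p2, p3, p4, hs.summable.abs, ?_⟩
  rw [Real.log_div (mul_pos p1 p2).ne' (mul_pos p3 p4).ne', Real.log_mul p1.ne' p2.ne',
    Real.log_mul p3.ne' p4.ne']
  refine (congrArg (HasSum _) ?_).mpr hs
  ring
end

section
/- (Corollary 3.9.) Let A, B, z, t be real numbers with |t| < exp(−(|A|+|B|)·|z|/2) and sinh((A+B)z/2) ≠ 0. Then exp( ∑_{k≥1} A·B·z²·k·S(kAz)·S(kBz)·t^k ) = ((1 − t·e^{(A−B)z/2})·(1 − t·e^{−(A−B)z/2})) / ((1 − t·e^{(A+B)z/2})·(1 − t·e^{−(A+B)z/2})) = 1 + 4·∑_{k≥1} (sinh(Az/2)·sinh(Bz/2)/sinh((A+B)z/2))·sinh(k(A+B)z/2)·t^k, where both series converge absolutely. -/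
theorem hasSum_pow_div_aux (x : ℝ) (hx : |x| < 1) :
    HasSum (fun n : ℕ => x ^ n / (n : ℝ)) (-Real.log (1 - x)) := by
  have h := Real.hasSum_pow_div_log_of_abs_lt_one hx
  rw [← hasSum_nat_add_iff' 1]
  simpa using h

theorem abs_mul_exp_lt_aux (t w c : ℝ) (ht : |t| < Real.exp (-c)) (hw : w ≤ c) :
    |t * Real.exp w| < 1 := by
  rw [abs_mul, abs_of_pos (Real.exp_pos w)]
  calc |t| * Real.exp w < Real.exp (-c) * Real.exp w :=
        mul_lt_mul_of_pos_right ht (Real.exp_pos w)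
    _ = Real.exp (-c + w) := (Real.exp_add _ _).symm
    _ ≤ 1 := Real.exp_le_one_iff.2 (by linarith)

/-- Corollary 3.9: for `|t| < exp(-(|A|+|B|)|z|/2)` and `sinh((A+B)z/2) ≠ 0`,
`exp(∑_{k≥1} A B z² k S(kAz) S(kBz) t^k)` equals the displayed ratio, which in turn
equals `1 + 4 ∑_{k≥1} (sinh(Az/2) sinh(Bz/2) / sinh((A+B)z/2)) sinh(k(A+B)z/2) t^k`;
both series converge absolutely. -/
theorem exp_sum_S_eq (A B z t : ℝ) (ht : |t| < Real.exp (-((|A| + |B|) * |z| / 2)))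
    (hs : Real.sinh ((A + B) * z / 2) ≠ 0) :
    Summable (fun k : ℕ =>
      |A * B * z ^ 2 * (k : ℝ) * S ((k : ℝ) * A * z) * S ((k : ℝ) * B * z) * t ^ k|) ∧
    Summable (fun k : ℕ =>
      |Real.sinh (A * z / 2) * Real.sinh (B * z / 2) / Real.sinh ((A + B) * z / 2) *
        Real.sinh ((k : ℝ) * (A + B) * z / 2) * t ^ k|) ∧
    Real.exp (∑' k : ℕ,
        A * B * z ^ 2 * (k : ℝ) * S ((k : ℝ) * A * z) * S ((k : ℝ) * B * z) * t ^ k) =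
      (1 - t * Real.exp ((A - B) * z / 2)) * (1 - t * Real.exp (-((A - B) * z / 2))) /
        ((1 - t * Real.exp ((A + B) * z / 2)) * (1 - t * Real.exp (-((A + B) * z / 2)))) ∧
    (1 - t * Real.exp ((A - B) * z / 2)) * (1 - t * Real.exp (-((A - B) * z / 2))) /
        ((1 - t * Real.exp ((A + B) * z / 2)) * (1 - t * Real.exp (-((A + B) * z / 2)))) =
      1 + 4 * ∑' k : ℕ,
          Real.sinh (A * z / 2) * Real.sinh (B * z / 2) / Real.sinh ((A + B) * z / 2) *
            Real.sinh ((k : ℝ) * (A + B) * z / 2) * t ^ k := by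
  have hA := abs_nonneg A
  have key : |(A + B) * z / 2| ≤ (|A| + |B|) * |z| / 2 := by
    rw [abs_div, abs_mul, abs_two]
    have := abs_add_le A B
    gcongr
  have key' : |(A - B) * z / 2| ≤ (|A| + |B|) * |z| / 2 := by
    rw [abs_div, abs_mul, abs_two]
    have := abs_sub A B
    gcongr
  have a1 := abs_mul_exp_lt_aux t _ _ ht ((le_abs_self _).trans key)
  have a2 := abs_mul_exp_lt_aux t _ _ ht ((neg_le_abs _).trans key)
  have a3 := abs_mul_exp_lt_aux t _ _ ht ((le_abs_self _).trans key')
  have a4 := abs_mul_exp_lt_aux t _ _ ht ((neg_le_abs _).trans key')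
  have p1 := sub_pos.2 (abs_lt.1 a1).2
  have p2 := sub_pos.2 (abs_lt.1 a2).2
  have p3 := sub_pos.2 (abs_lt.1 a3).2
  have p4 := sub_pos.2 (abs_lt.1 a4).2
  have H1 := (((hasSum_pow_div_aux _ a1).add (hasSum_pow_div_aux _ a2)).sub
    (hasSum_pow_div_aux _ a3)).sub (hasSum_pow_div_aux _ a4)
  simp only [← term_aux] at H1
  have H2 := ((hasSum_geometric_of_abs_lt_one a1).sub
    (hasSum_geometric_of_abs_lt_one a2)).mul_left
    (Real.sinh (A * z / 2) * Real.sinh (B * z / 2) / Real.sinh ((A + B) * z / 2) / 2)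
  have hterm : ∀ k : ℕ, Real.sinh (A * z / 2) * Real.sinh (B * z / 2) /
      Real.sinh ((A + B) * z / 2) / 2 * ((t * Real.exp ((A + B) * z / 2)) ^ k -
        (t * Real.exp (-((A + B) * z / 2))) ^ k) =
      Real.sinh (A * z / 2) * Real.sinh (B * z / 2) / Real.sinh ((A + B) * z / 2) *
        Real.sinh ((k : ℝ) * (A + B) * z / 2) * t ^ k := by
    intro k
    rw [Real.sinh_eq ((k : ℝ) * (A + B) * z / 2)]
    simp only [mul_pow, ← Real.exp_nat_mul]
    have e1 : (k : ℝ) * ((A + B) * z / 2) = (k : ℝ) * (A + B) * z / 2 := by ring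
    have e2 : (k : ℝ) * -((A + B) * z / 2) = -((k : ℝ) * (A + B) * z / 2) := by ring
    rw [e1, e2]
    ring
  simp only [hterm] at H2
  refine ⟨H1.summable.abs, H2.summable.abs, ?_, ?_⟩
  · rw [H1.tsum_eq]
    rw [show ∀ a b c d : ℝ, -a + -b - -c - -d = (c + d) - (a + b) by intros; ring]
    rw [Real.exp_sub, Real.exp_add, Real.exp_add, Real.exp_log p1, Real.exp_log p2,
      Real.exp_log p3, Real.exp_log p4]
  · rw [H2.tsum_eq]
    have h4 : 4 * (Real.sinh (A * z / 2) * Real.sinh (B * z / 2)) =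
        Real.exp ((A + B) * z / 2) + Real.exp (-((A + B) * z / 2))
        - Real.exp ((A - B) * z / 2) - Real.exp (-((A - B) * z / 2)) := by
      have e1 : (A + B) * z / 2 = A * z / 2 + B * z / 2 := by ring
      have e3 : (A - B) * z / 2 = A * z / 2 + -(B * z / 2) := by ring
      rw [e1, e3, neg_add, neg_add, neg_neg]
      simp only [Real.exp_add, Real.sinh_eq]
      ring
    have hsinh := Real.sinh_eq ((A + B) * z / 2)
    have hP : Real.exp ((A + B) * z / 2) * Real.exp (-((A + B) * z / 2)) = 1 := by
      rw [← Real.exp_add]; simp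
    have hQ : Real.exp ((A - B) * z / 2) * Real.exp (-((A - B) * z / 2)) = 1 := by
      rw [← Real.exp_add]; simp
    generalize Real.sinh ((A + B) * z / 2) = s at *
    generalize Real.exp ((A + B) * z / 2) = P at *
    generalize Real.exp (-((A + B) * z / 2)) = P' at *
    generalize Real.exp ((A - B) * z / 2) = Q at *
    generalize Real.exp (-((A - B) * z / 2)) = Q' at *
    generalize Real.sinh (A * z / 2) * Real.sinh (B * z / 2) = m at *
    have n1 := p1.ne'
    have n2 := p2.ne'
    have hinv : (1 - t * P)⁻¹ - (1 - t * P')⁻¹ = 2 * s * t / ((1 - t * P) * (1 - t * P')) := by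
      rw [hsinh]
      field_simp
      ring
    rw [hinv]
    have : 4 * (m / s / 2 * (2 * s * t / ((1 - t * P) * (1 - t * P')))) =
        4 * m * t / ((1 - t * P) * (1 - t * P')) := by
      field_simp
    rw [this, h4, div_eq_iff (mul_ne_zero n1 n2), add_mul, div_mul_cancel₀ _ (mul_ne_zero n1 n2)]
    linear_combination t ^ 2 * hQ - t ^ 2 * hP
end

section
/- (Lemma 4.6.) For all real numbers A₁, A₂, B: cosh(A₁)·sinh(A₂)·sinh(B)·sinh(A₁+A₂+B) + sinh(A₁)·cosh(A₂)·sinh(B)·sinh(A₁+A₂+B) + sinh(A₁)·sinh(A₂)·cosh(B)·sinh(A₁+A₂+B) − sinh(A₁)·sinh(A₂)·sinh(B)·cosh(A₁+A₂+B) = sinh(A₁+B)·sinh(A₂+B)·sinh(A₁+A₂). -/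
/-- Lemma 4.6. -/
theorem cosh_sinh_four_terms (A₁ A₂ B : ℝ) :
    Real.cosh A₁ * Real.sinh A₂ * Real.sinh B * Real.sinh (A₁ + A₂ + B) +
        Real.sinh A₁ * Real.cosh A₂ * Real.sinh B * Real.sinh (A₁ + A₂ + B) +
        Real.sinh A₁ * Real.sinh A₂ * Real.cosh B * Real.sinh (A₁ + A₂ + B) -
        Real.sinh A₁ * Real.sinh A₂ * Real.sinh B * Real.cosh (A₁ + A₂ + B) =
      Real.sinh (A₁ + B) * Real.sinh (A₂ + B) * Real.sinh (A₁ + A₂) := by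
  simp only [Real.sinh_add, Real.cosh_add]
  ring
end
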